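/- arXiv:2009.09488 — 5 statements merged into one kernel-verified Lean document; each statement's English description precedes it below -/
import Mathlib

section
/- Let K be a positive semiring, let R and R₀ be K-relations over a finite set X of attributes, and let S and S₀ be K-relations over a finite set Y of attributes. If R ≡ R₀ and S ≡ S₀, then R ⋈ S ≡ R₀ ⋈ S₀ (the join is well-defined up to equivalence). -/
open Finsupp

variable {A : Type*} [DecidableEq A]

/-- An `X`-tuple: a function assigning to each attribute `a ∈ X` an element of its domain. -/
def Tup (dom : A → Type*) (X : Finset A) : Type _ := ∀ a ∈ X, dom a

/-- Projection (restriction) of an `X`-tuple to `Y ⊆ X`. -/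
def restr (dom : A → Type*) {X Y : Finset A} (h : Y ⊆ X) (t : Tup dom X) : Tup dom Y :=
  fun a ha => t a (h ha)

/-- The marginal `R[Y]` of a `K`-relation `R` over `X`, for `Y ⊆ X`. -/
noncomputable def marg {dom : A → Type*} {K : Type*} [AddCommMonoid K] {X Y : Finset A}
    (h : Y ⊆ X) (R : Tup dom X →₀ K) : Tup dom Y →₀ K :=
  Finsupp.mapDomain (restr dom h) R

/-- Equivalence up to normalization of two `K`-relations over the same attribute set. -/
def KEquiv {dom : A → Type*} {K : Type*} [MulZeroClass K] {X : Finset A}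
    (R S : Tup dom X →₀ K) : Prop :=
  ∃ a b : K, a ≠ 0 ∧ b ≠ 0 ∧ ∀ t, a * R t = b * S t

/-- Merge an `X`-tuple and a `Y`-tuple into an `X ∪ Y`-tuple (values from the first argument
on `X`). -/
def merge {dom : A → Type*} {X Y : Finset A} (r : Tup dom X) (s : Tup dom Y) :
    Tup dom (X ∪ Y) :=
  fun a ha => if h : a ∈ X then r a h else s a ((Finset.mem_union.mp ha).resolve_left h)

/-- The correcting factor `c_S(u) = ∏_{v ∈ S[Z]', v ≠ u} S[Z](v)`. -/
noncomputable def cFactor {dom : A → Type*} {K : Type*} [CommSemiring K] {Y Z : Finset A}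
    (h : Z ⊆ Y) (S : Tup dom Y →₀ K) (u : Tup dom Z) : K :=
  haveI := Classical.decEq (Tup dom Z)
  ∏ v ∈ (marg h S).support.erase u, (marg h S) v

/-- The join of a `K`-relation over `X` and a `K`-relation over `Y`:
`(R ⋈ S)(t) = R(t[X])·S(t[Y])·c_S(t[X ∩ Y])`. -/
noncomputable def kjoin {dom : A → Type*} {K : Type*} [CommSemiring K] {X Y : Finset A}
    (R : Tup dom X →₀ K) (S : Tup dom Y →₀ K) : Tup dom (X ∪ Y) →₀ K :=
  haveI := Classical.decEq (Tup dom (X ∪ Y))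
  Finsupp.onFinset ((R.support ×ˢ S.support).image fun p => merge p.1 p.2)
    (fun t => R (restr dom Finset.subset_union_left t) *
      S (restr dom Finset.subset_union_right t) *
      cFactor Finset.inter_subset_right S (restr dom Finset.inter_subset_union t))
    (by
      intro t ht
      have hR : R (restr dom Finset.subset_union_left t) ≠ 0 :=
        left_ne_zero_of_mul (left_ne_zero_of_mul ht)
      have hS : S (restr dom Finset.subset_union_right t) ≠ 0 :=
        right_ne_zero_of_mul (left_ne_zero_of_mul ht)
      refine Finset.mem_image.mpr ⟨(restr dom Finset.subset_union_left t,
        restr dom Finset.subset_union_right t),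
        Finset.mem_product.mpr ⟨Finsupp.mem_support_iff.mpr hR, Finsupp.mem_support_iff.mpr hS⟩,
        ?_⟩
      funext a ha
      by_cases h : a ∈ X <;> simp [merge, restr, h])

/-- Two `K`-relations (over possibly different attribute sets) are consistent if a single
`K`-relation over the union has marginals equivalent to each of them. -/
def Consistent {dom : A → Type*} {K : Type*} [CommSemiring K] {X Y : Finset A}
    (R : Tup dom X →₀ K) (S : Tup dom Y →₀ K) : Prop :=
  ∃ T : Tup dom (X ∪ Y) →₀ K,
    KEquiv (marg Finset.subset_union_left T) R ∧ KEquiv (marg Finset.subset_union_right T) S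

/-!
Scaling the factors of a join scales the join: `(a • R) ⋈ S = a • (R ⋈ S)`, and for `c ≠ 0`
`R ⋈ (c • S) = c ^ n • (R ⋈ S)`, where `n` is the size of the support of the marginal of `S` on the
common attributes. Indeed, if `S(t) ≠ 0`, positivity puts the projection of `t` in that support, so
`c` enters `(R ⋈ (c • S))(t)` once through `S(t)` and `n - 1` times through the correcting factor.
Hence `a • R = b • R₀` and `c • S = d • S₀` give proportional joins.
-/

section Marginal

variable {A : Type*} {dom : A → Type*} {K : Type*}

theorem kEquiv_iff_smul_eq_smul [MulZeroClass K] {X : Finset A} {R S : Tup dom X →₀ K} :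
    KEquiv R S ↔ ∃ a b : K, a ≠ 0 ∧ b ≠ 0 ∧ a • R = b • S := by
  simp only [KEquiv, DFunLike.ext_iff, Finsupp.smul_apply, smul_eq_mul]

theorem marg_apply_restr_ne_zero [AddCommMonoid K] [Subsingleton (AddUnits K)] {X Y : Finset A}
    (h : Y ⊆ X) {R : Tup dom X →₀ K} {t : Tup dom X} (ht : R t ≠ 0) :
    marg h R (restr dom h t) ≠ 0 := by
  classical
  rw [← Finsupp.mem_support_iff, marg, Finsupp.mapDomain_support_of_subsingletonAddUnits]
  exact Finset.mem_image_of_mem _ (Finsupp.mem_support_iff.mpr ht)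

theorem marg_smul {M : Type*} [AddCommMonoid K] [DistribSMul M K] {X Y : Finset A} (h : Y ⊆ X)
    (c : M) (R : Tup dom X →₀ K) : marg h (c • R) = c • marg h R :=
  Finsupp.mapDomain_smul c R

theorem support_marg_smul [Semiring K] [NoZeroDivisors K] {X Y : Finset A} (h : Y ⊆ X)
    {c : K} (hc : c ≠ 0) (R : Tup dom X →₀ K) : (marg h (c • R)).support = (marg h R).support := by
  ext u
  simp only [marg_smul, Finsupp.mem_support_iff, Finsupp.smul_apply, smul_eq_mul, mul_ne_zero_iff,
    ne_eq, hc, not_false_eq_true, true_and]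

-- Multiplying by the missing factor `c` avoids the truncated exponent `card - 1`.
theorem mul_cFactor_smul [CommSemiring K] [NoZeroDivisors K] {Y Z : Finset A} (h : Z ⊆ Y)
    {c : K} (hc : c ≠ 0) {S : Tup dom Y →₀ K} {u : Tup dom Z} (hu : marg h S u ≠ 0) :
    c * cFactor h (c • S) u = c ^ (marg h S).support.card * cFactor h S u := by
  classical
  rw [cFactor, cFactor, support_marg_smul h hc]
  simp only [marg_smul, Finsupp.smul_apply, smul_eq_mul]
  rw [Finset.prod_mul_distrib, Finset.prod_const, ← mul_assoc, ← pow_succ',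
    Finset.card_erase_add_one (Finsupp.mem_support_iff.mpr hu)]

end Marginal

section Join

variable {dom : A → Type*} {K : Type*} [CommSemiring K] {X Y : Finset A}

theorem kjoin_apply (R : Tup dom X →₀ K) (S : Tup dom Y →₀ K) (t : Tup dom (X ∪ Y)) :
    kjoin R S t = R (restr dom Finset.subset_union_left t) *
      S (restr dom Finset.subset_union_right t) *
      cFactor Finset.inter_subset_right S (restr dom Finset.inter_subset_union t) :=
  rfl

theorem kjoin_smul_left (a : K) (R : Tup dom X →₀ K) (S : Tup dom Y →₀ K) :
    kjoin (a • R) S = a • kjoin R S := by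
  ext t
  simp only [kjoin_apply, Finsupp.smul_apply, smul_eq_mul, mul_assoc]

theorem kjoin_smul_right [NoZeroDivisors K] [Subsingleton (AddUnits K)] {c : K} (hc : c ≠ 0)
    (R : Tup dom X →₀ K) (S : Tup dom Y →₀ K) :
    kjoin R (c • S) =
      c ^ (marg (Finset.inter_subset_right : X ∩ Y ⊆ Y) S).support.card • kjoin R S := by
  ext t
  simp only [kjoin_apply, Finsupp.smul_apply, smul_eq_mul]
  set r := R (restr dom Finset.subset_union_left t)
  set s := S (restr dom Finset.subset_union_right t)
  set u := restr dom (Finset.inter_subset_union : X ∩ Y ⊆ X ∪ Y) t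
  set hZ : X ∩ Y ⊆ Y := Finset.inter_subset_right
  by_cases hs₀ : s = 0
  · simp only [hs₀, mul_zero, zero_mul]
  · have hu : marg hZ S u ≠ 0 := marg_apply_restr_ne_zero hZ hs₀
    calc r * (c * s) * cFactor hZ (c • S) u = r * s * (c * cFactor hZ (c • S) u) := by ring
      _ = r * s * (c ^ (marg hZ S).support.card * cFactor hZ S u) := by
        rw [mul_cFactor_smul hZ hc hu]
      _ = c ^ (marg hZ S).support.card * (r * s * cFactor hZ S u) := by ring

theorem kjoin_smul_smul [NoZeroDivisors K] [Subsingleton (AddUnits K)] (a : K) {c : K} (hc : c ≠ 0)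
    (R : Tup dom X →₀ K) (S : Tup dom Y →₀ K) :
    kjoin (a • R) (c • S) =
      (a * c ^ (marg (Finset.inter_subset_right : X ∩ Y ⊆ Y) S).support.card) • kjoin R S := by
  rw [kjoin_smul_left, kjoin_smul_right hc, smul_smul]

end Join

/-- The join of K-relations over a positive semiring is well-defined up to equivalence. -/
theorem statement2 {A : Type*} [DecidableEq A] (dom : A → Type*) (K : Type*)
    [CommSemiring K] [Nontrivial K] [NoZeroDivisors K]
    (hplus : ∀ a b : K, a + b = 0 → a = 0 ∧ b = 0)
    (X Y : Finset A) (R R₀ : Tup dom X →₀ K) (S S₀ : Tup dom Y →₀ K)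
    (hR : KEquiv R R₀) (hS : KEquiv S S₀) :
    KEquiv (kjoin R S) (kjoin R₀ S₀) := by
  have : Subsingleton (AddUnits K) :=
    subsingleton_of_forall_eq 0 fun u => AddUnits.ext (hplus _ _ u.add_neg).1
  obtain ⟨a, b, ha, hb, hR⟩ := kEquiv_iff_smul_eq_smul.mp hR
  obtain ⟨c, d, hc, hd, hS⟩ := kEquiv_iff_smul_eq_smul.mp hS
  have hjoin : kjoin (a • R) (c • S) = kjoin (b • R₀) (d • S₀) := by rw [hR, hS]
  rw [kjoin_smul_smul a hc, kjoin_smul_smul b hd] at hjoin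
  exact kEquiv_iff_smul_eq_smul.mpr
    ⟨_, _, mul_ne_zero ha (pow_ne_zero _ hc), mul_ne_zero hb (pow_ne_zero _ hd), hjoin⟩
end

section
/- Let K be a positive semiring, let R be a K-relation over a finite set X of attributes and S a K-relation over a finite set Y of attributes. Then the support of the join R ⋈ S equals the ordinary join of the supports: (R ⋈ S)' = R' ⋈ S'. -/
open Finsupp

variable {A : Type*} [DecidableEq A]

theorem cFactor_ne_zero {A : Type*} {dom : A → Type*} {K : Type*} [CommSemiring K] [Nontrivial K]
    [NoZeroDivisors K] {Y Z : Finset A} (h : Z ⊆ Y) (S : Tup dom Y →₀ K) (u : Tup dom Z) :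
    cFactor h S u ≠ 0 := by
  classical
  exact Finset.prod_ne_zero_iff.mpr fun _ hv => mem_support_iff.mp (Finset.mem_of_mem_erase hv)

section

variable {dom : A → Type*} {K : Type*} [CommSemiring K] {X Y : Finset A}

theorem kjoin_apply_ne_zero_iff [Nontrivial K] [NoZeroDivisors K] (R : Tup dom X →₀ K)
    (S : Tup dom Y →₀ K) (t : Tup dom (X ∪ Y)) :
    kjoin R S t ≠ 0 ↔ R (restr dom Finset.subset_union_left t) ≠ 0 ∧
      S (restr dom Finset.subset_union_right t) ≠ 0 := by
  rw [kjoin_apply, mul_ne_zero_iff_right (cFactor_ne_zero _ _ _), mul_ne_zero_iff]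

theorem statement3_general [Nontrivial K] [NoZeroDivisors K] (R : Tup dom X →₀ K)
    (S : Tup dom Y →₀ K) :
    ((kjoin R S).support : Set (Tup dom (X ∪ Y))) =
      {t | restr dom Finset.subset_union_left t ∈ R.support ∧
           restr dom Finset.subset_union_right t ∈ S.support} := by
  ext t
  simpa only [Finset.mem_coe, mem_support_iff, Set.mem_ofPred_eq] using
    kjoin_apply_ne_zero_iff R S t

end

/-- The support of the join of two K-relations is the ordinary join of their supports. -/
theorem statement3 {A : Type*} [DecidableEq A] (dom : A → Type*) (K : Type*)
    [CommSemiring K] [Nontrivial K] [NoZeroDivisors K]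
    (hplus : ∀ a b : K, a + b = 0 → a = 0 ∧ b = 0)
    (X Y : Finset A) (R : Tup dom X →₀ K) (S : Tup dom Y →₀ K) :
    ((kjoin R S).support : Set (Tup dom (X ∪ Y))) =
      {t | restr dom Finset.subset_union_left t ∈ R.support ∧
           restr dom Finset.subset_union_right t ∈ S.support} :=
  statement3_general R S
end

section
/- Let K be a positive semiring, let R be a K-relation over a finite set X of attributes and S a K-relation over a finite set Y of attributes, and let Z = X ∩ Y. For every X-tuple r in the left semijoin R' ⋉ S' := (R' ⋈ S')[X] of the supports, the marginal of the join satisfies (R ⋈ S)[X](r) = c*_{S,Z} · R(r), where c*_{S,Z} = Π_{v ∈ S[Z]'} S[Z](v). -/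
open Finsupp

variable {A : Type*} [DecidableEq A]

/-!
The `X ∪ Y`-tuples that extend a fixed `X`-tuple `r` correspond, by restriction to `Y`, to the
`Y`-tuples that agree with `r` on `Z = X ∩ Y`. Over this fibre both `R(t[X]) = R(r)` and the
correcting factor `c_S(t[Z]) = c_S(r[Z])` are constant, so `(R ⋈ S)[X](r)` is their product with
`S[Z](r[Z])`; and when `r[Z]` is in the support of `S[Z]`, the factor `S[Z](r[Z])` is exactly the
one missing from `c_S(r[Z])`. By positivity no cancellation occurs in a marginal, so for `r` in the
left semijoin `r[Z]` is indeed in the support of `S[Z]`.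
-/

theorem mapDomain_apply_eq_finsum {α β M : Type*} [AddCommMonoid M] (f : α → β) (x : α →₀ M)
    (b : β) : mapDomain f x b = ∑ᶠ a : {a // f a = b}, x a := by
  classical
  rw [finsum_subtype_eq_finsum_cond (f := x) (f · = b),
    finsum_cond_eq_sum_of_cond_iff (t := x.support.filter (f · = b)) x
      fun hx => by simp [hx]]
  simp only [mapDomain, Finsupp.sum, finsetSum_apply, single_apply, Finset.sum_filter]

theorem subsingleton_addUnits_of_add_eq_zero {M : Type*} [AddMonoid M]
    (h : ∀ a b : M, a + b = 0 → a = 0) : Subsingleton (AddUnits M) :=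
  subsingleton_of_forall_eq 0 fun u => AddUnits.ext (h _ _ u.val_neg)

section

variable {A : Type*} {dom : A → Type*} {X Y : Finset A}

theorem restr_mem_support_marg {M : Type*} [AddCommMonoid M] [Subsingleton (AddUnits M)]
    (h : Y ⊆ X) {R : Tup dom X →₀ M} {t : Tup dom X} (ht : t ∈ R.support) :
    restr dom h t ∈ (marg h R).support := by
  classical
  rw [marg, mapDomain_support_of_subsingletonAddUnits]
  exact Finset.mem_image_of_mem _ ht

theorem marg_mul_cFactor {K : Type*} [CommSemiring K] {h : Y ⊆ X} {S : Tup dom X →₀ K}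
    {u : Tup dom Y} (hu : u ∈ (marg h S).support) :
    marg h S u * cFactor h S u = ∏ v ∈ (marg h S).support, marg h S v :=
  letI := Classical.decEq (Tup dom Y)
  Finset.mul_prod_erase _ _ hu

end

section

variable {dom : A → Type*} {X Y : Finset A}

theorem restr_subset_union_left_merge (r : Tup dom X) (s : Tup dom Y) :
    restr dom Finset.subset_union_left (merge r s) = r := by
  funext a ha
  simp [restr, merge, ha]

theorem restr_subset_union_right_merge {r : Tup dom X} {s : Tup dom Y}
    (h : restr dom Finset.inter_subset_right s = restr dom Finset.inter_subset_left r) :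
    restr dom Finset.subset_union_right (merge r s) = s := by
  funext a haY
  by_cases haX : a ∈ X
  · have agree : s a haY = r a haX :=
      congrFun (congrFun h a) (Finset.mem_inter.mpr ⟨haX, haY⟩)
    simp [restr, merge, haX, agree]
  · simp [restr, merge, haX]

theorem merge_restr_restr (t : Tup dom (X ∪ Y)) :
    merge (restr dom Finset.subset_union_left t) (restr dom Finset.subset_union_right t) = t := by
  funext a ha
  by_cases haX : a ∈ X <;> simp [restr, merge, haX]

/-- The `X ∪ Y`-tuples extending an `X`-tuple `r` correspond to the `Y`-tuples that agree with `r`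
on `X ∩ Y`, by restriction to `Y` and merging with `r`. -/
def extensionEquiv (r : Tup dom X) :
    {t : Tup dom (X ∪ Y) // restr dom Finset.subset_union_left t = r} ≃
      {s : Tup dom Y //
        restr dom Finset.inter_subset_right s = restr dom Finset.inter_subset_left r} where
  toFun t :=
    ⟨restr dom Finset.subset_union_right t.1, congrArg (restr dom Finset.inter_subset_left) t.2⟩
  invFun s := ⟨merge r s.1, restr_subset_union_left_merge r s.1⟩
  left_inv := by
    rintro ⟨t, rfl⟩
    exact Subtype.ext (merge_restr_restr t)
  right_inv s := Subtype.ext (restr_subset_union_right_merge s.2)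

variable {K : Type*} [CommSemiring K]

theorem kjoin_apply_of_restr_eq (R : Tup dom X →₀ K) (S : Tup dom Y →₀ K) {r : Tup dom X}
    {t : Tup dom (X ∪ Y)} (ht : restr dom Finset.subset_union_left t = r) :
    kjoin R S t = R r * cFactor Finset.inter_subset_right S (restr dom Finset.inter_subset_left r) *
      S (restr dom Finset.subset_union_right t) := by
  subst ht
  exact mul_right_comm _ _ _

theorem marg_kjoin_apply (R : Tup dom X →₀ K) (S : Tup dom Y →₀ K) (r : Tup dom X) :
    marg Finset.subset_union_left (kjoin R S) r =
      R r * cFactor Finset.inter_subset_right S (restr dom Finset.inter_subset_left r) *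
        marg Finset.inter_subset_right S (restr dom Finset.inter_subset_left r) := by
  set c := cFactor Finset.inter_subset_right S (restr dom Finset.inter_subset_left r)
  calc marg Finset.subset_union_left (kjoin R S) r
      = ∑ᶠ t : {t // restr dom Finset.subset_union_left t = r}, kjoin R S t :=
        mapDomain_apply_eq_finsum _ _ _
    _ = ∑ᶠ t : {t // restr dom Finset.subset_union_left t = r},
          R r * c * S (extensionEquiv r t) :=
        finsum_congr fun t => kjoin_apply_of_restr_eq R S t.2
    _ = ∑ᶠ s : {s : Tup dom Y //
          restr dom Finset.inter_subset_right s = restr dom Finset.inter_subset_left r},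
          R r * c * S s :=
        finsum_comp_equiv (extensionEquiv r) (f := fun s => R r * c * S s.1)
    _ = R r * c * ∑ᶠ s : {s : Tup dom Y //
          restr dom Finset.inter_subset_right s = restr dom Finset.inter_subset_left r}, S s :=
        (mul_finsum' _ _ (S.hasFiniteSupport.comp_of_injective Subtype.val_injective)).symm
    _ = R r * c * marg Finset.inter_subset_right S (restr dom Finset.inter_subset_left r) := by
        rw [marg, mapDomain_apply_eq_finsum]

theorem statement4_general (R : Tup dom X →₀ K) (S : Tup dom Y →₀ K) (r : Tup dom X)
    (hr : restr dom Finset.inter_subset_left r ∈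
      (marg (Finset.inter_subset_right : X ∩ Y ⊆ Y) S).support) :
    marg Finset.subset_union_left (kjoin R S) r =
      (∏ v ∈ (marg (Finset.inter_subset_right : X ∩ Y ⊆ Y) S).support,
        marg (Finset.inter_subset_right : X ∩ Y ⊆ Y) S v) * R r := by
  rw [marg_kjoin_apply, ← marg_mul_cFactor hr]
  ring

end

/-- For every tuple  in the left semijoin of the supports, the marginal of the join on 
at  equals  where  and . -/
theorem statement4 {A : Type*} [DecidableEq A] (dom : A → Type*) (K : Type*)
    [CommSemiring K] [Nontrivial K] [NoZeroDivisors K]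
    (hplus : ∀ a b : K, a + b = 0 → a = 0 ∧ b = 0)
    (X Y : Finset A) (R : Tup dom X →₀ K) (S : Tup dom Y →₀ K) (r : Tup dom X)
    (hr : ∃ t : Tup dom (X ∪ Y),
      restr dom Finset.subset_union_left t ∈ R.support ∧
      restr dom Finset.subset_union_right t ∈ S.support ∧
      restr dom Finset.subset_union_left t = r) :
    marg Finset.subset_union_left (kjoin R S) r =
      (∏ v ∈ (marg (Finset.inter_subset_right : X ∩ Y ⊆ Y) S).support,
        marg (Finset.inter_subset_right : X ∩ Y ⊆ Y) S v) * R r := by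
  obtain ⟨t, -, hS, rfl⟩ := hr
  have := subsingleton_addUnits_of_add_eq_zero fun a b h => (hplus a b h).1
  exact statement4_general R S _ (restr_mem_support_marg Finset.inter_subset_right hS)
end

section
/- Let R be a probability distribution over a finite set X of attributes and S a probability distribution over a finite set Y of attributes, let Z = X ∩ Y, and suppose R and S are consistent, i.e., there is a probability distribution T over X ∪ Y with T[X] = R and T[Y] = S. Define the probability distribution R ⋈_P S over X ∪ Y by (R ⋈_P S)(t) = R(t[X])·S(t[Y])/S[Z](t[Z]) (with the convention 0/0 = 0). Let W(R,S) be the set of all probability distributions T over X ∪ Y with T[X] = R and T[Y] = S. Then R ⋈_P S belongs to W(R,S), every P ∈ W(R,S) satisfies H(P) ≤ H(R ⋈_P S), and any P ∈ W(R,S) with H(P) = H(R ⋈_P S) equals R ⋈_P S; that is, R ⋈_P S is the unique maximizer of Shannon entropy in W(R,S). -/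
open Finsupp

variable {A : Type*} [DecidableEq A]

/-- The probabilistic join: `(R ⋈_P S)(t) = R(t[X])·S(t[Y])/S[Z](t[Z])` with `0/0 = 0`
(division in the nonnegative reals is total, with zero denominator giving `0`). -/
noncomputable def joinP {A : Type*} [DecidableEq A] {dom : A → Type*} {X Y : Finset A}
    (R : Tup dom X →₀ NNReal) (S : Tup dom Y →₀ NNReal) : Tup dom (X ∪ Y) →₀ NNReal :=
  haveI := Classical.decEq (Tup dom (X ∪ Y))
  Finsupp.onFinset ((R.support ×ˢ S.support).image fun p => merge p.1 p.2)
    (fun t => R (restr dom Finset.subset_union_left t) *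
      S (restr dom Finset.subset_union_right t) /
      marg (Finset.inter_subset_right : X ∩ Y ⊆ Y) S (restr dom Finset.inter_subset_union t))
    (by
      intro t ht
      have h1 : R (restr dom Finset.subset_union_left t) *
          S (restr dom Finset.subset_union_right t) ≠ 0 := by
        intro h
        apply ht
        show R _ * S _ / _ = 0
        rw [h, zero_div]
      have hR := left_ne_zero_of_mul h1
      have hS := right_ne_zero_of_mul h1
      refine Finset.mem_image.mpr ⟨(restr dom Finset.subset_union_left t,
        restr dom Finset.subset_union_right t),
        Finset.mem_product.mpr ⟨Finsupp.mem_support_iff.mpr hR,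
          Finsupp.mem_support_iff.mpr hS⟩, ?_⟩
      funext a ha
      by_cases h : a ∈ X <;> simp [merge, restr, h])

/-- Shannon entropy of a finitely supported nonnegative real valued relation. -/
noncomputable def entropy {A : Type*} [DecidableEq A] {dom : A → Type*} {X : Finset A}
    (P : Tup dom X →₀ NNReal) : ℝ :=
  -∑ t ∈ P.support, (P t : ℝ) * Real.logb 2 (P t)


/-!
The `X ∪ Y`-tuples extending a given `X`-tuple `r` correspond to the `Y`-tuples that agree with `r`
on `Z = X ∩ Y`, so the `X`-marginal of `R ⋈_P S` at `r` is `R(r) · S[Z](r[Z]) / S[Z](r[Z]) = R(r)`;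
since `R[Z] = S[Z]`, the `Y`-marginal is symmetric. On the support of a witness `P`, the function
`log (R ⋈_P S)` is a sum of functions of `t[X]`, `t[Y]` and `t[Z]`, so the cross entropy of `P`
relative to `R ⋈_P S` depends on the marginals of `P` only and equals `H(R) + H(S) - H(S[Z])` for
every witness, `R ⋈_P S` included. Gibbs' inequality then gives `H(P) ≤ H(P, R ⋈_P S) = H(R ⋈_P S)`,
with equality only for `P = R ⋈_P S`.
-/

open Finset (subset_union_left subset_union_right inter_subset_left inter_subset_right
  inter_subset_union)
open InformationTheory (klFun klFun_nonneg klFun_eq_zero_iff klFun_apply klFun_zero)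
open scoped NNReal

section Pushforward

variable {α β γ δ : Type*}

theorem mapDomain_apply_ne_zero {M : Type*} [AddCommMonoid M] [Subsingleton (AddUnits M)]
    (f : α → β) {P : α →₀ M} {t : α} (ht : P t ≠ 0) : mapDomain f P (f t) ≠ 0 := by
  classical
  rw [← mem_support_iff, mapDomain_support_of_subsingletonAddUnits]
  exact Finset.mem_image_of_mem f (mem_support_iff.mpr ht)

theorem mapDomain_apply_eq_finsum_mem {M : Type*} [AddCommMonoid M] (f : α → β) (P : α →₀ M)
    (b : β) : mapDomain f P b = ∑ᶠ t ∈ f ⁻¹' {b}, P t := by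
  classical
  rw [finsum_mem_eq_sum_of_inter_support_eq (t := {t ∈ P.support | f t = b}) P
    (by ext t; simp +contextual [and_comm]), Finset.sum_filter]
  simp only [mapDomain, Finsupp.sum, finsetSum_apply, single_apply]

/-- The hypothesis `hfib` says, fibre by fibre, that `δ` is the fibre product of `α` and `β`
over `γ`. -/
theorem mapDomain_eq_of_bijOn_fibers {K : Type*} [Semifield K]
    {p : δ → α} {q : δ → β} {r : α → γ} {s : β → γ}
    (hfib : ∀ a, Set.BijOn q (p ⁻¹' {a}) (s ⁻¹' {r a}))
    {R : α →₀ K} {S : β →₀ K} (hRS : ∀ a, mapDomain s S (r a) = 0 → R a = 0)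
    {J : δ →₀ K} (hJ : ∀ t, J t = R (p t) * S (q t) / mapDomain s S (r (p t))) :
    mapDomain p J = R := by
  ext a
  calc mapDomain p J a
      = ∑ᶠ t ∈ p ⁻¹' {a}, J t := mapDomain_apply_eq_finsum_mem p J a
    _ = ∑ᶠ b ∈ s ⁻¹' {r a}, R a / mapDomain s S (r a) * S b :=
        finsum_mem_eq_of_bijOn q (hfib a) fun t ht => by
          rw [hJ, Set.mem_singleton_iff.mp ht, mul_div_right_comm]
    _ = R a / mapDomain s S (r a) * mapDomain s S (r a) := by
        rw [← mul_finsum_mem, ← mapDomain_apply_eq_finsum_mem]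
    _ = R a := div_mul_cancel_of_imp (hRS a)

end Pushforward

section CrossEntropy

variable {α β : Type*}

/-- The cross entropy `-∑ P(t) log₂ q(t)` of a finitely supported `P` relative to `q`. The second
argument is an arbitrary function, so that it can be pulled back along maps. -/
noncomputable def crossEntropy (P : α →₀ ℝ≥0) (q : α → ℝ≥0) : ℝ :=
  -P.sum fun t x => (x : ℝ) * Real.logb 2 (q t)

theorem crossEntropy_mapDomain (f : α → β) (P : α →₀ ℝ≥0) (q : β → ℝ≥0) :
    crossEntropy (mapDomain f P) q = crossEntropy P (q ∘ f) := by
  simp only [crossEntropy, Function.comp_apply]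
  rw [sum_mapDomain_index (by simp) (by simp [add_mul])]

theorem crossEntropy_mul {P : α →₀ ℝ≥0} {p q : α → ℝ≥0} (hp : ∀ t ∈ P.support, p t ≠ 0)
    (hq : ∀ t ∈ P.support, q t ≠ 0) :
    crossEntropy P (p * q) = crossEntropy P p + crossEntropy P q := by
  rw [crossEntropy, crossEntropy, crossEntropy, ← neg_add, ← Finsupp.sum_add]
  refine congrArg _ (Finset.sum_congr rfl fun t ht => ?_)
  dsimp only
  rw [Pi.mul_apply, NNReal.coe_mul, Real.logb_mul (NNReal.coe_ne_zero.mpr (hp t ht))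
    (NNReal.coe_ne_zero.mpr (hq t ht)), mul_add]

theorem crossEntropy_inv (P : α →₀ ℝ≥0) (q : α → ℝ≥0) :
    crossEntropy P q⁻¹ = -crossEntropy P q := by
  simp [crossEntropy, Finsupp.sum]

theorem crossEntropy_div {P : α →₀ ℝ≥0} {p q : α → ℝ≥0} (hp : ∀ t ∈ P.support, p t ≠ 0)
    (hq : ∀ t ∈ P.support, q t ≠ 0) :
    crossEntropy P (p / q) = crossEntropy P p - crossEntropy P q := by
  have hq' : ∀ t ∈ P.support, q⁻¹ t ≠ 0 := fun t ht => inv_ne_zero (hq t ht)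
  rw [div_eq_mul_inv, crossEntropy_mul hp hq', crossEntropy_inv, sub_eq_add_neg]

theorem crossEntropy_sub_self_eq_sum_klFun {P Q : α →₀ ℝ≥0} (hsupp : P.support ⊆ Q.support)
    (hdeg : P.degree = Q.degree) :
    crossEntropy P Q - crossEntropy P P =
      (∑ t ∈ Q.support, (Q t : ℝ) * klFun (P t / Q t)) / Real.log 2 := by
  have sum_P (g : α → ℝ) : P.sum (fun t x => (x : ℝ) * g t) = ∑ t ∈ Q.support, (P t : ℝ) * g t :=
    P.sum_of_support_subset hsupp _ (by simp)
  have hmass : ∑ t ∈ Q.support, ((Q t : ℝ) - P t) = 0 := by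
    have hP := sum_P 1
    simp only [Pi.one_apply, mul_one] at hP
    rw [Finset.sum_sub_distrib, ← hP, sub_eq_zero]
    exact mod_cast hdeg.symm
  have hterm : ∀ t ∈ Q.support, (Q t : ℝ) * klFun (P t / Q t) =
      P t * Real.log (P t) - P t * Real.log (Q t) + (Q t - P t) := fun t ht => by
    have hQ : (Q t : ℝ) ≠ 0 := NNReal.coe_ne_zero.mpr (mem_support_iff.mp ht)
    obtain hP | hP := eq_or_ne (P t : ℝ) 0
    · simp [hP, klFun_zero]
    · rw [klFun_apply, Real.log_div hP hQ]
      field_simp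
      ring
  rw [Finset.sum_congr rfl hterm, Finset.sum_add_distrib, hmass, crossEntropy, crossEntropy,
    sum_P, sum_P, add_zero, Finset.sum_sub_distrib]
  simp only [Real.logb, ← mul_div_assoc, ← Finset.sum_div]
  ring

theorem crossEntropy_self_le {P Q : α →₀ ℝ≥0} (hsupp : P.support ⊆ Q.support)
    (hdeg : P.degree = Q.degree) : crossEntropy P P ≤ crossEntropy P Q := by
  rw [← sub_nonneg, crossEntropy_sub_self_eq_sum_klFun hsupp hdeg]
  have hkl (t : α) : 0 ≤ klFun (P t / Q t) := klFun_nonneg (by positivity)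
  exact div_nonneg (Finset.sum_nonneg fun t _ => mul_nonneg (Q t).coe_nonneg (hkl t))
    (Real.log_nonneg one_le_two)

theorem eq_of_crossEntropy_self_eq {P Q : α →₀ ℝ≥0} (hsupp : P.support ⊆ Q.support)
    (hdeg : P.degree = Q.degree) (h : crossEntropy P P = crossEntropy P Q) : P = Q := by
  have hkl (t : α) : 0 ≤ klFun (P t / Q t) := klFun_nonneg (by positivity)
  have hsum : ∑ t ∈ Q.support, (Q t : ℝ) * klFun (P t / Q t) = 0 := by
    have hdiv := crossEntropy_sub_self_eq_sum_klFun hsupp hdeg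
    rw [h, sub_self, eq_comm, div_eq_zero_iff] at hdiv
    exact hdiv.resolve_right (Real.log_pos one_lt_two).ne'
  rw [Finset.sum_eq_zero_iff_of_nonneg fun t _ => mul_nonneg (Q t).coe_nonneg (hkl t)] at hsum
  ext t
  by_cases ht : t ∈ Q.support
  · have hQ : (Q t : ℝ) ≠ 0 := NNReal.coe_ne_zero.mpr (mem_support_iff.mp ht)
    have hratio := (mul_eq_zero.mp (hsum t ht)).resolve_left hQ
    rwa [klFun_eq_zero_iff (by positivity), div_eq_one_iff_eq hQ] at hratio
  · rw [notMem_support_iff.mp ht, notMem_support_iff.mp fun hP => ht (hsupp hP)]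

end CrossEntropy

section Tuples

variable {dom : A → Type*} {X Y Z : Finset A}

theorem restr_union_ext {t t' : Tup dom (X ∪ Y)}
    (hX : restr dom subset_union_left t = restr dom subset_union_left t')
    (hY : restr dom subset_union_right t = restr dom subset_union_right t') : t = t' := by
  funext a ha
  rcases Finset.mem_union.mp ha with h | h
  · exact congrFun (congrFun hX a) h
  · exact congrFun (congrFun hY a) h

theorem restr_merge_left (r : Tup dom X) (s : Tup dom Y) :
    restr dom subset_union_left (merge r s) = r := by
  funext a ha
  simp [restr, merge, ha]

theorem restr_merge_right {r : Tup dom X} {s : Tup dom Y}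
    (h : restr dom (inter_subset_left : X ∩ Y ⊆ X) r = restr dom inter_subset_right s) :
    restr dom subset_union_right (merge r s) = s := by
  funext a ha
  by_cases hX : a ∈ X
  · simpa [restr, merge, hX] using congrFun (congrFun h a) (Finset.mem_inter.mpr ⟨hX, ha⟩)
  · simp [restr, merge, hX]

theorem bijOn_restr_right (r : Tup dom X) :
    Set.BijOn (restr dom (subset_union_right : Y ⊆ X ∪ Y)) (restr dom subset_union_left ⁻¹' {r})
      (restr dom inter_subset_right ⁻¹' {restr dom (inter_subset_left : X ∩ Y ⊆ X) r}) := by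
  refine ⟨?_, fun t ht t' ht' h => restr_union_ext (ht.trans ht'.symm) h, fun s hs => ?_⟩
  · rintro t rfl
    rfl
  · exact ⟨merge r s, restr_merge_left r s, restr_merge_right hs.symm⟩

theorem bijOn_restr_left (s : Tup dom Y) :
    Set.BijOn (restr dom (subset_union_left : X ⊆ X ∪ Y)) (restr dom subset_union_right ⁻¹' {s})
      (restr dom inter_subset_left ⁻¹' {restr dom (inter_subset_right : X ∩ Y ⊆ Y) s}) := by
  refine ⟨?_, fun t ht t' ht' h => restr_union_ext h (ht.trans ht'.symm), fun r hr => ?_⟩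
  · rintro t rfl
    rfl
  · exact ⟨merge r s, restr_merge_right hr, restr_merge_left r s⟩

omit [DecidableEq A] in
theorem marg_marg {K : Type*} [AddCommMonoid K] (hYX : Y ⊆ X) (hZY : Z ⊆ Y)
    (T : Tup dom X →₀ K) : marg hZY (marg hYX T) = marg (hZY.trans hYX) T :=
  mapDomain_comp.symm

end Tuples

section Join

variable {dom : A → Type*} {X Y : Finset A}

theorem entropy_eq_crossEntropy_self (P : Tup dom X →₀ ℝ≥0) : entropy P = crossEntropy P P :=
  rfl

/-- The relations over `X ∪ Y` with marginals `R` and `S`. If `R` is a probability distribution,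
then so are all of them, and this is the set `W(R, S)`. -/
def witnesses (R : Tup dom X →₀ ℝ≥0) (S : Tup dom Y →₀ ℝ≥0) : Set (Tup dom (X ∪ Y) →₀ ℝ≥0) :=
  {T | marg subset_union_left T = R ∧ marg subset_union_right T = S}

variable {R : Tup dom X →₀ ℝ≥0} {S : Tup dom Y →₀ ℝ≥0} {P : Tup dom (X ∪ Y) →₀ ℝ≥0}

theorem marg_inter_eq_of_mem_witnesses (hP : P ∈ witnesses R S) :
    marg (inter_subset_left : X ∩ Y ⊆ X) R = marg inter_subset_right S := by
  rw [← hP.1, ← hP.2, marg_marg, marg_marg]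

theorem joinP_apply (R : Tup dom X →₀ ℝ≥0) (S : Tup dom Y →₀ ℝ≥0) (t : Tup dom (X ∪ Y)) :
    joinP R S t = R (restr dom subset_union_left t) * S (restr dom subset_union_right t) /
      marg (inter_subset_right : X ∩ Y ⊆ Y) S (restr dom inter_subset_union t) :=
  rfl

theorem joinP_mem_witnesses
    (hRS : marg (inter_subset_left : X ∩ Y ⊆ X) R = marg inter_subset_right S) :
    joinP R S ∈ witnesses R S := by
  constructor
  · refine mapDomain_eq_of_bijOn_fibers bijOn_restr_right (fun r hr => ?_) (joinP_apply R S)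
    contrapose! hr
    exact (DFunLike.congr_fun hRS _).symm.trans_ne (mapDomain_apply_ne_zero _ hr)
  · refine mapDomain_eq_of_bijOn_fibers (S := R) bijOn_restr_left (fun s hs => ?_) fun t => ?_
    · contrapose! hs
      exact (DFunLike.congr_fun hRS _).trans_ne (mapDomain_apply_ne_zero _ hs)
    · rw [joinP_apply, ← hRS, mul_comm]
      rfl

theorem apply_restr_left_ne_zero (hP : P ∈ witnesses R S) {t : Tup dom (X ∪ Y)}
    (ht : t ∈ P.support) : R (restr dom subset_union_left t) ≠ 0 :=
  hP.1 ▸ mapDomain_apply_ne_zero _ (mem_support_iff.mp ht)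

theorem apply_restr_right_ne_zero (hP : P ∈ witnesses R S) {t : Tup dom (X ∪ Y)}
    (ht : t ∈ P.support) : S (restr dom subset_union_right t) ≠ 0 :=
  hP.2 ▸ mapDomain_apply_ne_zero _ (mem_support_iff.mp ht)

theorem marg_apply_restr_inter_ne_zero (hP : P ∈ witnesses R S) {t : Tup dom (X ∪ Y)}
    (ht : t ∈ P.support) :
    marg (inter_subset_right : X ∩ Y ⊆ Y) S (restr dom inter_subset_union t) ≠ 0 :=
  mapDomain_apply_ne_zero _ (apply_restr_right_ne_zero hP ht)

theorem support_subset_support_joinP (hP : P ∈ witnesses R S) :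
    P.support ⊆ (joinP R S).support := fun t ht => by
  rw [mem_support_iff, joinP_apply]
  exact div_ne_zero
    (mul_ne_zero (apply_restr_left_ne_zero hP ht) (apply_restr_right_ne_zero hP ht))
    (marg_apply_restr_inter_ne_zero hP ht)

theorem degree_eq_of_mem_witnesses (hP : P ∈ witnesses R S) : P.degree = R.degree := by
  rw [← hP.1, marg, degree_mapDomain]

theorem crossEntropy_joinP (hP : P ∈ witnesses R S) :
    crossEntropy P (joinP R S) =
      entropy R + entropy S - entropy (marg (inter_subset_right : X ∩ Y ⊆ Y) S) := by
  have hjoin : ⇑(joinP R S) =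
      R ∘ restr dom subset_union_left * S ∘ restr dom subset_union_right /
        marg inter_subset_right S ∘ restr dom inter_subset_union :=
    funext (joinP_apply R S)
  have hR : crossEntropy P (R ∘ restr dom subset_union_left) = entropy R := by
    rw [← crossEntropy_mapDomain, ← marg, hP.1, entropy_eq_crossEntropy_self]
  have hS : crossEntropy P (S ∘ restr dom subset_union_right) = entropy S := by
    rw [← crossEntropy_mapDomain, ← marg, hP.2, entropy_eq_crossEntropy_self]
  have hZ : crossEntropy P (marg inter_subset_right S ∘ restr dom inter_subset_union) =
      entropy (marg (inter_subset_right : X ∩ Y ⊆ Y) S) := by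
    rw [← crossEntropy_mapDomain, ← marg, entropy_eq_crossEntropy_self, ← hP.2, marg_marg]
  have hRne : ∀ t ∈ P.support, (R ∘ restr dom subset_union_left) t ≠ 0 :=
    fun t ht => apply_restr_left_ne_zero hP ht
  have hSne : ∀ t ∈ P.support, (S ∘ restr dom subset_union_right) t ≠ 0 :=
    fun t ht => apply_restr_right_ne_zero hP ht
  rw [hjoin, crossEntropy_div, crossEntropy_mul hRne hSne, hR, hS, hZ]
  · exact fun t ht => mul_ne_zero (hRne t ht) (hSne t ht)
  · exact fun t ht => marg_apply_restr_inter_ne_zero hP ht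

theorem crossEntropy_joinP_eq_entropy_joinP (hP : P ∈ witnesses R S) :
    crossEntropy P (joinP R S) = entropy (joinP R S) := by
  have hJ := joinP_mem_witnesses (marg_inter_eq_of_mem_witnesses hP)
  rw [entropy_eq_crossEntropy_self, crossEntropy_joinP hP, crossEntropy_joinP hJ]

theorem entropy_le_entropy_joinP (hP : P ∈ witnesses R S) : entropy P ≤ entropy (joinP R S) := by
  have hJ := joinP_mem_witnesses (marg_inter_eq_of_mem_witnesses hP)
  rw [← crossEntropy_joinP_eq_entropy_joinP hP, entropy_eq_crossEntropy_self]
  exact crossEntropy_self_le (support_subset_support_joinP hP)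
    ((degree_eq_of_mem_witnesses hP).trans (degree_eq_of_mem_witnesses hJ).symm)

theorem eq_joinP_of_entropy_eq (hP : P ∈ witnesses R S) (h : entropy P = entropy (joinP R S)) :
    P = joinP R S := by
  have hJ := joinP_mem_witnesses (marg_inter_eq_of_mem_witnesses hP)
  rw [← crossEntropy_joinP_eq_entropy_joinP hP, entropy_eq_crossEntropy_self] at h
  exact eq_of_crossEntropy_self_eq (support_subset_support_joinP hP)
    ((degree_eq_of_mem_witnesses hP).trans (degree_eq_of_mem_witnesses hJ).symm) h

end Join

theorem statement7_general {dom : A → Type*} {X Y : Finset A} {R : Tup dom X →₀ ℝ≥0}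
    {S : Tup dom Y →₀ ℝ≥0}
    (hRS : marg (inter_subset_left : X ∩ Y ⊆ X) R = marg inter_subset_right S) :
    joinP R S ∈ witnesses R S ∧ ∀ P ∈ witnesses R S,
      entropy P ≤ entropy (joinP R S) ∧ (entropy P = entropy (joinP R S) → P = joinP R S) :=
  ⟨joinP_mem_witnesses hRS,
    fun _ hP => ⟨entropy_le_entropy_joinP hP, eq_joinP_of_entropy_eq hP⟩⟩

/-- For consistent probability distributions, the probabilistic join is the unique maximizer
of Shannon entropy among all probability distributions witnessing the consistency. -/
theorem statement7 {A : Type*} [DecidableEq A] (dom : A → Type*)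
    (X Y : Finset A) (R : Tup dom X →₀ NNReal) (S : Tup dom Y →₀ NNReal)
    (hR : ∑ t ∈ R.support, R t = 1) (hS : ∑ t ∈ S.support, S t = 1)
    (hcons : ∃ T : Tup dom (X ∪ Y) →₀ NNReal, (∑ t ∈ T.support, T t = 1) ∧
      marg Finset.subset_union_left T = R ∧ marg Finset.subset_union_right T = S) :
    ((∑ t ∈ (joinP R S).support, joinP R S t = 1) ∧
      marg Finset.subset_union_left (joinP R S) = R ∧
      marg Finset.subset_union_right (joinP R S) = S) ∧
    (∀ P : Tup dom (X ∪ Y) →₀ NNReal, (∑ t ∈ P.support, P t = 1) →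
      marg Finset.subset_union_left P = R → marg Finset.subset_union_right P = S →
      entropy P ≤ entropy (joinP R S)) ∧
    (∀ P : Tup dom (X ∪ Y) →₀ NNReal, (∑ t ∈ P.support, P t = 1) →
      marg Finset.subset_union_left P = R → marg Finset.subset_union_right P = S →
      entropy P = entropy (joinP R S) → P = joinP R S) := by
  obtain ⟨T, -, hT⟩ := hcons
  obtain ⟨hJ, hmax⟩ := statement7_general (marg_inter_eq_of_mem_witnesses hT)
  exact ⟨⟨(degree_eq_of_mem_witnesses hJ).trans hR, hJ⟩,
    fun P _ hX hY => (hmax P ⟨hX, hY⟩).1, fun P _ hX hY => (hmax P ⟨hX, hY⟩).2⟩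
end

section
/- Let U be a finite set of attributes, let X and Y be subsets of U with X ∪ Y = U, and let P be an ordinary relation over U. If P satisfies the functional dependency X ∩ Y → X ∖ Y or P satisfies the functional dependency X ∩ Y → Y ∖ X, then the decomposition of P along X and Y is lossless-join, i.e., P = P[X] ⋈ P[Y]. -/
open Finsupp

variable {A : Type*} [DecidableEq A]

/-- Two tuples over `U` agree on all attributes in `V`. -/
def agreeOn {A : Type*} [DecidableEq A] {dom : A → Type*} {U : Finset A} (V : Finset A)
    (t₁ t₂ : Tup dom U) : Prop :=
  ∀ a (ha : a ∈ U), a ∈ V → t₁ a ha = t₂ a ha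

/-- An ordinary relation (a set of `U`-tuples) satisfies the functional dependency `V → W`
if any two of its tuples that agree on `V` also agree on `W`. -/
def SatisfiesFD {A : Type*} [DecidableEq A] {dom : A → Type*} {U : Finset A}
    (P : Finset (Tup dom U)) (V W : Finset A) : Prop :=
  ∀ t₁ ∈ P, ∀ t₂ ∈ P, agreeOn V t₁ t₂ → agreeOn W t₁ t₂


section General

variable {ι : Type*} {α : ι → Type*} {U V W X Y : Set ι}

/-- A tuple over a possibly infinite set `U` of attributes. Membership is a separate argument, as
in `Tup`, so that for a finite set `U` the type `AttrTuple α ↑U` unfolds to `Tup α U`. -/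
def AttrTuple (α : ι → Type*) (U : Set ι) : Type _ := ∀ i ∈ U, α i

namespace AttrTuple

/-- The projection `t[V]` of a `U`-tuple `t` to a subset `V ⊆ U`. -/
def restrict (h : V ⊆ U) (t : AttrTuple α U) : AttrTuple α V := fun i hi => t i (h hi)

/-- Two `U`-tuples agree on all attributes in `V`, where `V` need not be contained in `U`. -/
def AgreeOn (V : Set ι) (t₁ t₂ : AttrTuple α U) : Prop :=
  ∀ i (hi : i ∈ U), i ∈ V → t₁ i hi = t₂ i hi

variable {r s t : AttrTuple α U}

theorem AgreeOn.symm (h : AgreeOn V s t) : AgreeOn V t s := fun i hi hV => (h i hi hV).symm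

theorem AgreeOn.trans (hrs : AgreeOn V r s) (hst : AgreeOn V s t) : AgreeOn V r t :=
  fun i hi hV => (hrs i hi hV).trans (hst i hi hV)

theorem AgreeOn.mono (hVW : V ⊆ W) (h : AgreeOn W s t) : AgreeOn V s t :=
  fun i hi hV => h i hi (hVW hV)

theorem AgreeOn.union (hV : AgreeOn V s t) (hW : AgreeOn W s t) : AgreeOn (V ∪ W) s t :=
  fun i hi hVW => hVW.elim (hV i hi) (hW i hi)

theorem AgreeOn.eq_of_subset (hUV : U ⊆ V) (h : AgreeOn V s t) : s = t :=
  funext fun i => funext fun hi => h i hi (hUV hi)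

theorem agreeOn_of_restrict_eq_restrict (h : V ⊆ U) (hst : restrict h s = restrict h t) :
    AgreeOn V s t :=
  fun i _ hV => congrFun (congrFun hst i) hV

end AttrTuple

open AttrTuple

/-- The functional dependency `V → W` for a possibly infinite relation `P` over `U`. -/
def FunctionallyDetermines (P : Set (AttrTuple α U)) (V W : Set ι) : Prop :=
  ∀ t₁ ∈ P, ∀ t₂ ∈ P, AgreeOn V t₁ t₂ → AgreeOn W t₁ t₂

/-- The join `Q ⋈ R` of a relation over `X` and a relation over `Y`, as a relation over `U`. The
ambient set `U` is a parameter, to be used when `U = X ∪ Y`. -/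
def naturalJoin (hX : X ⊆ U) (hY : Y ⊆ U) (Q : Set (AttrTuple α X)) (R : Set (AttrTuple α Y)) :
    Set (AttrTuple α U) :=
  {t | restrict hX t ∈ Q ∧ restrict hY t ∈ R}

theorem naturalJoin_comm (hX : X ⊆ U) (hY : Y ⊆ U) (Q : Set (AttrTuple α X))
    (R : Set (AttrTuple α Y)) : naturalJoin hX hY Q R = naturalJoin hY hX R Q :=
  Set.ext fun _ => and_comm

theorem subset_naturalJoin_image_restrict (hX : X ⊆ U) (hY : Y ⊆ U) (P : Set (AttrTuple α U)) :
    P ⊆ naturalJoin hX hY (restrict hX '' P) (restrict hY '' P) :=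
  fun _ ht => ⟨Set.mem_image_of_mem _ ht, Set.mem_image_of_mem _ ht⟩

variable {P : Set (AttrTuple α U)}

/-- Through `t`, the tuples `r` and `s` agree on `X ∩ Y`, so the dependency makes `r` take the
values of `s`, hence those of `t`, on `Y \ X` as well. -/
theorem FunctionallyDetermines.eq_of_agreeOn (hP : FunctionallyDetermines P (X ∩ Y) (Y \ X))
    (hU : U ⊆ X ∪ Y) {r s t : AttrTuple α U} (hr : r ∈ P) (hs : s ∈ P)
    (hrt : AgreeOn X r t) (hst : AgreeOn Y s t) : r = t := by
  have hrs : AgreeOn (X ∩ Y) r s :=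
    (hrt.mono Set.inter_subset_left).trans (hst.mono Set.inter_subset_right).symm
  have hrt_sdiff : AgreeOn (Y \ X) r t := (hP r hr s hs hrs).trans (hst.mono Set.sdiff_subset)
  exact (hrt.union hrt_sdiff).eq_of_subset (Set.union_sdiff_self.symm ▸ hU)

theorem FunctionallyDetermines.naturalJoin_image_restrict
    (hP : FunctionallyDetermines P (X ∩ Y) (Y \ X)) (hX : X ⊆ U) (hY : Y ⊆ U) (hU : U ⊆ X ∪ Y) :
    naturalJoin hX hY (restrict hX '' P) (restrict hY '' P) = P := by
  refine Set.Subset.antisymm ?_ (subset_naturalJoin_image_restrict hX hY P)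
  rintro t ⟨⟨r, hr, hrt⟩, ⟨s, hs, hst⟩⟩
  have hr_eq : r = t := hP.eq_of_agreeOn hU hr hs
    (agreeOn_of_restrict_eq_restrict hX hrt) (agreeOn_of_restrict_eq_restrict hY hst)
  exact hr_eq ▸ hr

theorem statement9_general (hX : X ⊆ U) (hY : Y ⊆ U) (hU : U ⊆ X ∪ Y)
    (hP : FunctionallyDetermines P (X ∩ Y) (X \ Y) ∨ FunctionallyDetermines P (X ∩ Y) (Y \ X)) :
    P = naturalJoin hX hY (restrict hX '' P) (restrict hY '' P) := by
  rcases hP with hP | hP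
  · rw [Set.inter_comm] at hP
    rw [naturalJoin_comm, hP.naturalJoin_image_restrict hY hX (Set.union_comm X Y ▸ hU)]
  · exact (hP.naturalJoin_image_restrict hX hY hU).symm

end General

theorem satisfiesFD_iff_functionallyDetermines {dom : A → Type*} {U V W : Finset A}
    {P : Finset (Tup dom U)} :
    SatisfiesFD P V W ↔
      FunctionallyDetermines (α := dom) (U := (U : Set A)) (P : Set (Tup dom U)) V W :=
  Iff.rfl

/-- Lossless-join decompositions of ordinary relations: if a relation over `U = X ∪ Y`
satisfies one of the two functional dependencies, then it equals the join of its
projections on `X` and on `Y`. -/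
theorem statement9 {A : Type*} [DecidableEq A] (dom : A → Type*)
    (U X Y : Finset A) (hXU : X ⊆ U) (hYU : Y ⊆ U) (hU : X ∪ Y = U)
    (P : Finset (Tup dom U))
    (hfd : SatisfiesFD P (X ∩ Y) (X \ Y) ∨ SatisfiesFD P (X ∩ Y) (Y \ X)) :
    ∀ t : Tup dom U, t ∈ P ↔
      ((∃ s ∈ P, restr dom hXU s = restr dom hXU t) ∧
       (∃ s ∈ P, restr dom hYU s = restr dom hYU t)) := by
  simp only [satisfiesFD_iff_functionallyDetermines, Finset.coe_inter, Finset.coe_sdiff] at hfd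
  exact Set.ext_iff.mp (statement9_general hXU hYU (by exact_mod_cast hU.ge) hfd)
end
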